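/- Let f : [ℓ,u] → ℝ be L_f-Lipschitz with exact discretization x* ∈ ℝ^I on the uniform grid with I points, let x ∈ ℝ^I, and let f̂_x be the piecewise linear approximation built from x on this grid. Set C = √(8/15)·(u − ℓ)^{3/2}·L_f and D = √(3/40)·(u − ℓ)^{1/2}·L_f. For every ε > 0, if I > C·ε^{−1} + 1 and ‖x − x*‖₂² < D·ε, then (∫_ℓ^u (f̂_x(t) − f(t))² dt)^{1/2} < ε. -/

import Mathlib

open Finset

/-- Uniform grid with `I` points on `[l, u]` (0-indexed): `t[i] = l + i·(u−l)/(I−1)`. -/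
noncomputable def unifGrid (l u : ℝ) (I : ℕ) (i : ℕ) : ℝ := l + i * (u - l) / ((I : ℝ) - 1)

lemma poly_int (c d k0 k1 k2 : ℝ) : ∫ s in c..d, (k0 + k1 * s + k2 * s^2) =
    k0 * (d - c) + k1 * (d^2 - c^2) / 2 + k2 * (d^3 - c^3) / 3 := by
  have h : ∀ s ∈ Set.uIcc c d, HasDerivAt (fun s : ℝ => k0 * s + k1 * s^2/2 + k2 * s^3/3)
      (k0 + k1 * s + k2 * s^2) s := by
    intro s _
    have h1 := ((hasDerivAt_id s).const_mul k0)
    have h2 := (((hasDerivAt_pow 2 s).const_mul k1).div_const 2)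
    have h3 := (((hasDerivAt_pow 3 s).const_mul k2).div_const 3)
    refine ((h1.add h2).add h3).congr_deriv ?_
    norm_num
    ring
  rw [intervalIntegral.integral_eq_sub_of_hasDerivAt h
    (Continuous.intervalIntegrable (by fun_prop) _ _)]
  ring

lemma bound_int (H : ℝ → ℝ) (hH : ContinuousOn H (Set.Icc 0 1)) (c d k0 k1 k2 : ℝ)
    (h0 : 0 ≤ c) (hcd : c ≤ d) (h1 : d ≤ 1)
    (hb : ∀ s, c ≤ s → s ≤ d → H s ≤ k0 + k1 * s + k2 * s^2) :
    ∫ s in c..d, H s ≤ k0 * (d - c) + k1 * (d^2 - c^2) / 2 + k2 * (d^3 - c^3) / 3 := by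
  rw [← poly_int]
  apply intervalIntegral.integral_mono_on hcd
  · apply ContinuousOn.intervalIntegrable_of_Icc hcd
    exact hH.mono (Set.Icc_subset_Icc h0 h1)
  · exact Continuous.intervalIntegrable (by fun_prop) _ _
  · intro s hs
    exact hb s hs.1 hs.2

lemma split_int (H : ℝ → ℝ) (hH : ContinuousOn H (Set.Icc 0 1)) (c d e : ℝ)
    (h0 : 0 ≤ c) (hcd : c ≤ d) (hde : d ≤ e) (h1 : e ≤ 1) :
    ∫ s in c..e, H s = (∫ s in c..d, H s) + ∫ s in d..e, H s := by
  rw [intervalIntegral.integral_add_adjacent_intervals]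
  · apply ContinuousOn.intervalIntegrable_of_Icc hcd
    exact hH.mono (Set.Icc_subset_Icc h0 (hde.trans h1))
  · apply ContinuousOn.intervalIntegrable_of_Icc hde
    exact hH.mono (Set.Icc_subset_Icc (h0.trans hcd) h1)

lemma L1a (G : ℝ → ℝ) (hG : ContinuousOn G (Set.Icc 0 1)) (p : ℝ) (hp0 : 0 ≤ p) (hp1 : p ≤ 1/2)
    (b1 : ∀ s, 0 ≤ s → s ≤ 1 → G s ≤ 2 * (1 - p) * s)
    (b2 : ∀ s, 0 ≤ s → s ≤ 1 → G s ≤ 2 * p * (1 - s))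
    (b3 : ∀ s, 0 ≤ s → s ≤ 1 → -G s ≤ 2 * p * s)
    (b4 : ∀ s, 0 ≤ s → s ≤ 1 → -G s ≤ 2 * (1 - p) * (1 - s)) :
    ∫ s in (0:ℝ)..1, G s ^ 2 ≤ 101 / 1000 := by
  have hc : ContinuousOn (fun s => G s ^ 2) (Set.Icc 0 1) := hG.pow 2
  rw [split_int _ hc 0 p 1 le_rfl hp0 (by linarith) le_rfl,
    split_int _ hc p (1/2) 1 hp0 hp1 (by linarith) le_rfl,
    split_int _ hc (1/2) (1-p) 1 (by norm_num) (by linarith) (by linarith) le_rfl]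
  have key : ∀ x y : ℝ, x ≤ y → -x ≤ y → x ^ 2 ≤ y ^ 2 := by
    intro x y h1 h2
    exact sq_le_sq' (by linarith) h1
  have i1 := bound_int _ hc 0 p 0 0 (4 * (1-p)^2) le_rfl hp0 (by linarith) (by
    intro s h0 h1
    have := key _ _ (b1 s h0 (by linarith)) ((b3 s h0 (by linarith)).trans (by nlinarith))
    linarith)
  have i2 := bound_int _ hc p (1/2) (4*p^2) (-8*p^2) (4 * p^2) hp0 hp1 (by linarith) (by
    intro s h0 h1
    have := key _ _ (b2 s (by linarith) (by linarith)) ((b3 s (by linarith) (by linarith)).trans (by nlinarith))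
    linarith)
  have i3 := bound_int _ hc (1/2) (1-p) 0 0 (4 * p^2) (by norm_num) (by linarith) (by linarith) (by
    intro s h0 h1
    have := key _ _ ((b2 s (by linarith) (by linarith)).trans (by nlinarith : _ ≤ 2 * p * s)) (b3 s (by linarith) (by linarith))
    linarith)
  have i4 := bound_int _ hc (1-p) 1 (4*(1-p)^2) (-8*(1-p)^2) (4 * (1-p)^2) (by linarith) (by linarith) le_rfl (by
    intro s h0 h1
    have := key _ _ ((b2 s (by linarith) (by linarith)).trans (by nlinarith : _ ≤ 2 * (1-p) * (1-s))) (b4 s (by linarith) (by linarith))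
    linarith)
  have fin : (8/3) * (p^2 * ((1-p)^2 - 1/8)) ≤ 101/1000 := by
    have h : p^2 * ((1-p)^2 - 1/8) = (p*(1-p))^2 - p^2/8 := by ring
    nlinarith [sq_nonneg (p - 2/5), sq_nonneg (p*(p - 2/5)), sq_nonneg (p^2 - p + 6/25), mul_nonneg hp0 (sq_nonneg (p-2/5)), mul_nonneg (sub_nonneg.2 hp1) (sq_nonneg (p-2/5)), mul_nonneg (mul_nonneg hp0 (sub_nonneg.2 hp1)) (sq_nonneg (p-2/5)), mul_nonneg (mul_nonneg hp0 (sub_nonneg.2 hp1)) (sq_nonneg (p-79/200)),sq_nonneg (p - 79/200)]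
  nlinarith

lemma L1 (G : ℝ → ℝ) (hG : ContinuousOn G (Set.Icc 0 1)) (p : ℝ) (hp0 : 0 ≤ p) (hp1 : p ≤ 1)
    (b1 : ∀ s, 0 ≤ s → s ≤ 1 → G s ≤ 2 * (1 - p) * s)
    (b2 : ∀ s, 0 ≤ s → s ≤ 1 → G s ≤ 2 * p * (1 - s))
    (b3 : ∀ s, 0 ≤ s → s ≤ 1 → -G s ≤ 2 * p * s)
    (b4 : ∀ s, 0 ≤ s → s ≤ 1 → -G s ≤ 2 * (1 - p) * (1 - s)) :
    ∫ s in (0:ℝ)..1, G s ^ 2 ≤ 101 / 1000 := by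
  rcases le_total p (1/2) with h | h
  · exact L1a G hG p hp0 h b1 b2 b3 b4
  · have := L1a (fun s => - G s) hG.neg (1-p) (by linarith) (by linarith)
      (by simpa using b3) b4 (by simpa using b1) (by simpa using b2)
    simpa using this

lemma L2 (G : ℝ → ℝ) (hG : ContinuousOn G (Set.Icc 0 1)) (p a b : ℝ)
    (ha : 0 ≤ a) (hb : 0 ≤ b)
    (b1 : ∀ s, 0 ≤ s → s ≤ 1 → G s ≤ 2 * (1 - p) * s)
    (b2 : ∀ s, 0 ≤ s → s ≤ 1 → G s ≤ 2 * p * (1 - s)) :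
    ∫ s in (0:ℝ)..1, ((1 - s) * a + s * b) * G s ≤ (a * (2 - p) + b * (1 + p)) / 12 := by
  have hc : ContinuousOn (fun s => ((1 - s) * a + s * b) * G s) (Set.Icc 0 1) :=
    ContinuousOn.mul (by fun_prop) hG
  rw [split_int _ hc 0 (1/2) 1 le_rfl (by norm_num) (by norm_num) le_rfl]
  have nn : ∀ s : ℝ, 0 ≤ s → s ≤ 1 → 0 ≤ (1 - s) * a + s * b := by
    intro s h0 h1
    have := sub_nonneg.2 h1
    positivity
  have i1 := bound_int _ hc 0 (1/2) 0 (2*(1-p)*a) (2*(1-p)*(b-a)) le_rfl (by norm_num) (by norm_num) (by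
    intro s h0 h1
    have := mul_le_mul_of_nonneg_left (b1 s h0 (by linarith)) (nn s h0 (by linarith))
    linarith)
  have i2 := bound_int _ hc (1/2) 1 (2*p*a) (2*p*(b-2*a)) (2*p*(a-b)) (by norm_num) (by norm_num) le_rfl (by
    intro s h0 h1
    have := mul_le_mul_of_nonneg_left (b2 s (by linarith) (by linarith)) (nn s (by linarith) (by linarith))
    linarith)
  linarith

lemma L3 (G : ℝ → ℝ) (hG : ContinuousOn G (Set.Icc 0 1)) (p a b : ℝ) (hp0 : 0 ≤ p) (hp1 : p ≤ 1)
    (b1 : ∀ s, 0 ≤ s → s ≤ 1 → G s ≤ 2 * (1 - p) * s)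
    (b2 : ∀ s, 0 ≤ s → s ≤ 1 → G s ≤ 2 * p * (1 - s))
    (b3 : ∀ s, 0 ≤ s → s ≤ 1 → -G s ≤ 2 * p * s)
    (b4 : ∀ s, 0 ≤ s → s ≤ 1 → -G s ≤ 2 * (1 - p) * (1 - s)) :
    ∫ s in (0:ℝ)..1, ((1 - s) * a + s * b + G s) ^ 2 ≤ 4/5 * (a^2 + b^2) + 16/75 := by
  have hq := L1 G hG p hp0 hp1 b1 b2 b3 b4
  have hc2 : IntervalIntegrable (fun s => G s ^ 2) MeasureTheory.volume 0 1 :=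
    ContinuousOn.intervalIntegrable_of_Icc zero_le_one (hG.pow 2)
  have hc1 : IntervalIntegrable (fun s => ((1 - s) * a + s * b) * G s) MeasureTheory.volume 0 1 :=
    ContinuousOn.intervalIntegrable_of_Icc zero_le_one (ContinuousOn.mul (by fun_prop) hG)
  have hc0 : IntervalIntegrable (fun s => a^2 + 2*a*(b-a)*s + (b-a)^2*s^2) MeasureTheory.volume 0 1 :=
    Continuous.intervalIntegrable (by fun_prop) _ _
  have e : ∫ s in (0:ℝ)..1, ((1 - s) * a + s * b + G s) ^ 2 = (a^2+a*b+b^2)/3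
      + 2 * (∫ s in (0:ℝ)..1, ((1 - s) * a + s * b) * G s) + ∫ s in (0:ℝ)..1, G s ^ 2 := by
    have : (a^2+a*b+b^2)/3 = ∫ s in (0:ℝ)..1, (a^2 + 2*a*(b-a)*s + (b-a)^2*s^2) := by
      rw [poly_int]; ring
    rw [this, ← intervalIntegral.integral_const_mul, ← intervalIntegral.integral_add hc0 (hc1.const_mul 2),
      ← intervalIntegral.integral_add (hc0.add (hc1.const_mul 2)) hc2]
    congr 1
    ext s
    ring
  rw [e]
  have fin : ∀ a b p : ℝ, 0 ≤ a → 0 ≤ b → 0 ≤ p → p ≤ 1 →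
     (a^2+a*b+b^2)/3 + 2 * ((a * (2 - p) + b * (1 + p)) / 12) + 101/1000 ≤ 4/5 * (a^2 + b^2) + 16/75 := by
    intro a b p ha hb hp hp1
    have hd : (1 - 2*p) * ((a-b)/2) / 6 ≤ 19/15 * ((a-b)/2)^2 + 1/180 := by
      nlinarith [sq_nonneg ((a-b)/2 - 5/76*(1-2*p)), mul_nonneg hp (sub_nonneg.2 hp1)]
    nlinarith [sq_nonneg ((a+b)/2 - 5/12)]
  have cross : 0 ≤ a * b → 2 * (∫ s in (0:ℝ)..1, ((1 - s) * a + s * b) * G s) ≤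
      4/5 * (a^2 + b^2) + 16/75 - (a^2+a*b+b^2)/3 - 101/1000 := by
    intro hab
    rcases mul_nonneg_iff.1 hab with ⟨h1, h2⟩ | ⟨h1, h2⟩
    · have := L2 G hG p a b h1 h2 b1 b2
      have := fin a b p h1 h2 hp0 hp1
      linarith
    · have := L2 (fun s => - G s) hG.neg (1-p) (-a) (-b) (by linarith) (by linarith) (by simpa using b3) b4
      have e2 : ∫ s in (0:ℝ)..1, ((1 - s) * (-a) + s * (-b)) * (- G s) = ∫ s in (0:ℝ)..1, ((1 - s) * a + s * b) * G s := by
        congr 1; ext s; ring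
      rw [e2] at this
      have := fin (-a) (-b) (1-p) (by linarith) (by linarith) (by linarith) (by linarith)
      nlinarith
  rcases le_total 0 (a*b) with hab | hab
  · have := cross hab
    linarith
  · have : ∫ s in (0:ℝ)..1, 2 * (((1 - s) * a + s * b) * G s) ≤
        ∫ s in (0:ℝ)..1, (7/5 * (a^2 + 2*a*(b-a)*s + (b-a)^2*s^2) + 5/7 * G s ^ 2) := by
      apply intervalIntegral.integral_mono_on zero_le_one (hc1.const_mul 2) ((hc0.const_mul _).add (hc2.const_mul _))
      intro s _
      nlinarith [sq_nonneg (7/5 * ((1 - s) * a + s * b) - G s)]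
    rw [intervalIntegral.integral_add (hc0.const_mul _) (hc2.const_mul _), intervalIntegral.integral_const_mul,
      intervalIntegral.integral_const_mul, intervalIntegral.integral_const_mul, poly_int] at this
    nlinarith

lemma lip_cont (F : ℝ → ℝ) (K l u : ℝ) (hK : 0 ≤ K)
    (hF : ∀ s ∈ Set.Icc l u, ∀ t ∈ Set.Icc l u, |F s - F t| ≤ K * |s - t|) :
    ContinuousOn F (Set.Icc l u) := by
  have : LipschitzOnWith ⟨K, hK⟩ F (Set.Icc l u) := by
    apply LipschitzOnWith.of_dist_le_mul
    intro s hs t ht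
    rw [Real.dist_eq, Real.dist_eq]
    exact hF s hs t ht
  exact this.continuousOn

lemma core (F : ℝ → ℝ) (y0 y1 : ℝ)
    (hF : ∀ s ∈ Set.Icc (0:ℝ) 1, ∀ t ∈ Set.Icc (0:ℝ) 1, |F s - F t| ≤ |s - t|) :
    ∫ s in (0:ℝ)..1, ((1 - s) * y0 + s * y1 - F s) ^ 2 ≤
      4/5 * ((y0 - F 0)^2 + (y1 - F 1)^2) + 16/75 := by
  have hc : ContinuousOn F (Set.Icc 0 1) := lip_cont F 1 0 1 zero_le_one (by simpa using hF)
  have m0 : (0:ℝ) ∈ Set.Icc (0:ℝ) 1 := by simp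
  have m1 : (1:ℝ) ∈ Set.Icc (0:ℝ) 1 := by simp
  have h01 := abs_le.1 (hF 1 m1 0 m0)
  norm_num at h01
  have h0 : ∀ s, 0 ≤ s → s ≤ 1 → -s ≤ F s - F 0 ∧ F s - F 0 ≤ s := by
    intro s a b
    have := hF s ⟨a, b⟩ 0 m0
    rw [sub_zero, abs_of_nonneg a] at this
    exact abs_le.1 this
  have h1 : ∀ s, 0 ≤ s → s ≤ 1 → -(1-s) ≤ F 1 - F s ∧ F 1 - F s ≤ 1-s := by
    intro s a b
    have := hF 1 m1 s ⟨a, b⟩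
    rw [abs_of_nonneg (sub_nonneg.2 b)] at this
    exact abs_le.1 this
  have := L3 (fun s => (1-s) * F 0 + s * F 1 - F s) (ContinuousOn.sub (by fun_prop) hc)
    ((1 - (F 1 - F 0))/2) (y0 - F 0) (y1 - F 1) (by linarith) (by linarith)
    (by intro s a b; have := h0 s a b; nlinarith [this.1, this.2])
    (by intro s a b; have := h1 s a b; nlinarith [this.1, this.2])
    (by intro s a b; have := h0 s a b; nlinarith [this.1, this.2])
    (by intro s a b; have := h1 s a b; nlinarith [this.1, this.2])
  convert this using 3
  ring

lemma coreK (F : ℝ → ℝ) (y0 y1 K : ℝ) (hK : 0 < K)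
    (hF : ∀ s ∈ Set.Icc (0:ℝ) 1, ∀ t ∈ Set.Icc (0:ℝ) 1, |F s - F t| ≤ K * |s - t|) :
    ∫ s in (0:ℝ)..1, ((1 - s) * y0 + s * y1 - F s) ^ 2 ≤
      4/5 * ((y0 - F 0)^2 + (y1 - F 1)^2) + 16/75 * K^2 := by
  have := core (fun s => F s / K) (y0/K) (y1/K) (by
    intro s hs t ht
    rw [← sub_div, abs_div, abs_of_pos hK, div_le_iff₀ hK, mul_comm]
    exact hF s hs t ht)
  have e : ∫ s in (0:ℝ)..1, ((1 - s) * y0 + s * y1 - F s) ^ 2 =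
      K^2 * ∫ s in (0:ℝ)..1, ((1 - s) * (y0/K) + s * (y1/K) - F s / K) ^ 2 := by
    rw [← intervalIntegral.integral_const_mul]
    congr 1; ext s; field_simp
  rw [e]
  refine (mul_le_mul_of_nonneg_left this (sq_nonneg K)).trans (le_of_eq ?_)
  field_simp

lemma piece (f : ℝ → ℝ) (L c h y0 y1 : ℝ) (hL : 0 < L) (hh : 0 < h)
    (hf : ∀ s ∈ Set.Icc c (c+h), ∀ t ∈ Set.Icc c (c+h), |f s - f t| ≤ L * |s - t|) :
    ∫ t in c..(c+h), (y0 + (y1 - y0) * (t - c) / h - f t) ^ 2 ≤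
      h * (4/5 * ((y0 - f c)^2 + (y1 - f (c+h))^2) + 16/75 * (L*h)^2) := by
  have hm : ∀ s ∈ Set.Icc (0:ℝ) 1, h * s + c ∈ Set.Icc c (c+h) := by
    intro s hs
    constructor <;> nlinarith [hs.1, hs.2]
  have := coreK (fun s => f (h * s + c)) y0 y1 (L*h) (by positivity) (by
    intro s hs t ht
    refine (hf _ (hm s hs) _ (hm t ht)).trans (le_of_eq ?_)
    rw [show h * s + c - (h * t + c) = h * (s - t) by ring, abs_mul, abs_of_pos hh]
    ring)
  have e := intervalIntegral.mul_integral_comp_mul_add (a := 0) (b := 1) (f := fun t => (y0 + (y1 - y0) * (t - c) / h - f t) ^ 2) (c := h) (d := c)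
  have e1 : h * 1 + c = c + h := by ring
  simp only [mul_zero, zero_add, e1] at e this
  rw [← e]
  refine mul_le_mul_of_nonneg_left (le_trans (le_of_eq ?_) this) hh.le
  congr 1; ext s
  field_simp
  ring

/-- Connection between the continuous and discrete problems: an approximately correct
discretization yields an approximately correct piecewise linear function. -/
theorem continuous_discrete_connection
    (l u : ℝ) (hlu : l < u) (I : ℕ) (hI2 : 2 ≤ I)
    (f : ℝ → ℝ) (Lf : ℝ)
    (hfLip : ∀ s ∈ Set.Icc l u, ∀ t ∈ Set.Icc l u, |f s - f t| ≤ Lf * |s - t|)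
    (x : ℕ → ℝ) (fhat : ℝ → ℝ)
    (hfhat : ∀ i : ℕ, i + 1 < I → ∀ t ∈ Set.Icc (unifGrid l u I i) (unifGrid l u I (i + 1)),
      fhat t = x i + (x (i + 1) - x i) * (t - unifGrid l u I i) / ((u - l) / ((I : ℝ) - 1)))
    (ε : ℝ) (hε : 0 < ε)
    (hI : (I : ℝ) > (Real.sqrt (8 / 15) * ((u - l) * Real.sqrt (u - l)) * Lf) / ε + 1)
    (hx : ∑ i ∈ range I, (x i - f (unifGrid l u I i)) ^ 2 <
      (Real.sqrt (3 / 40) * Real.sqrt (u - l) * Lf) * ε) :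
    Real.sqrt (∫ t in l..u, (fhat t - f t) ^ 2) < ε := by
  obtain ⟨N, rfl⟩ : ∃ N, I = N + 1 := ⟨I - 1, by omega⟩
  have hN : 0 < N := by omega
  have hNR : (0:ℝ) < N := by exact_mod_cast hN
  have hw : 0 < u - l := sub_pos.2 hlu
  set W := u - l with hW
  set r := Real.sqrt W with hr
  have hrpos : 0 < r := Real.sqrt_pos.2 hw
  have hr2 : r ^ 2 = W := Real.sq_sqrt hw.le
  set S := ∑ i ∈ range (N+1), (x i - f (unifGrid l u (N+1) i)) ^ 2 with hS
  have hS0 : 0 ≤ S := Finset.sum_nonneg (fun i _ => sq_nonneg _)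
  have hs3 : 0 < Real.sqrt (3/40) := Real.sqrt_pos.2 (by norm_num)
  have hs8 : 0 < Real.sqrt (8/15) := Real.sqrt_pos.2 (by norm_num)
  have hrel : Real.sqrt (3/40) = 3/8 * Real.sqrt (8/15) := by
    rw [Real.sqrt_eq_iff_mul_self_eq (by norm_num) (by positivity)]
    have := Real.mul_self_sqrt (show (0:ℝ) ≤ 8/15 by norm_num)
    nlinarith
  have hL : 0 < Lf := by
    have h1 := hS0.trans_lt hx
    by_contra hneg
    push Not at hneg
    have : Real.sqrt (3/40) * r * Lf * ε ≤ 0 :=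
      mul_nonpos_of_nonpos_of_nonneg (mul_nonpos_of_nonneg_of_nonpos (by positivity) hneg) hε.le
    linarith
  have hI1 : ((N + 1 : ℕ) : ℝ) - 1 = N := by push_cast; ring
  set h := W / N with hh
  have hhpos : 0 < h := div_pos hw hNR
  have hNh : N * h = W := by rw [hh]; field_simp
  have grid : ∀ i, unifGrid l u (N+1) i = l + i * h := by
    intro i
    rw [unifGrid, hI1, hh, hW]; ring
  have gs : ∀ i, unifGrid l u (N+1) (i+1) = unifGrid l u (N+1) i + h := by
    intro i; rw [grid, grid]; push_cast; ring
  have sub : ∀ i < N, Set.Icc (unifGrid l u (N+1) i) (unifGrid l u (N+1) i + h) ⊆ Set.Icc l u := by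
    intro i hi
    rw [grid]
    have hi' : (i:ℝ) + 1 ≤ N := by exact_mod_cast hi
    apply Set.Icc_subset_Icc
    · have : (0:ℝ) ≤ i * h := by positivity
      linarith
    · nlinarith
  have hfc : ContinuousOn f (Set.Icc l u) := lip_cont f Lf l u hL.le hfLip
  -- pieces
  have heq : ∀ i < N, ∀ t ∈ Set.uIcc (unifGrid l u (N+1) i) (unifGrid l u (N+1) i + h),
      (fun t => (fhat t - f t)^2) t =
      (fun t => (x i + (x (i+1) - x i) * (t - unifGrid l u (N+1) i) / h - f t)^2) t := by
    intro i hi t ht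
    rw [Set.uIcc_of_le (by linarith), ← gs] at ht
    have := hfhat i (by omega) t ht
    rw [hI1] at this
    dsimp only
    rw [this]
  have hint : ∀ i < N, IntervalIntegrable (fun t => (fhat t - f t)^2) MeasureTheory.volume
      (unifGrid l u (N+1) i) (unifGrid l u (N+1) (i+1)) := by
    intro i hi
    rw [gs]
    apply ContinuousOn.intervalIntegrable
    refine ContinuousOn.congr ?_ (heq i hi)
    refine ContinuousOn.pow (ContinuousOn.sub (by fun_prop) (hfc.mono ?_)) 2
    rw [Set.uIcc_of_le (by linarith)]
    exact sub i hi
  have hsum := intervalIntegral.sum_integral_adjacent_intervals (n := N) hint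
  have g0 : unifGrid l u (N+1) 0 = l := by rw [grid]; simp
  have gN : unifGrid l u (N+1) N = u := by rw [grid, hNh, hW]; ring
  rw [g0, gN] at hsum
  have hle : ∫ t in l..u, (fhat t - f t)^2 ≤ ∑ i ∈ range N,
      h * (4/5 * ((x i - f (unifGrid l u (N+1) i))^2 + (x (i+1) - f (unifGrid l u (N+1) (i+1)))^2)
        + 16/75 * (Lf*h)^2) := by
    rw [← hsum]
    apply Finset.sum_le_sum
    intro i hi
    have hi := Finset.mem_range.1 hi
    rw [gs, intervalIntegral.integral_congr (heq i hi)]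
    exact piece f Lf _ h _ _ hL hhpos
      (fun s hs t ht => hfLip s (sub i hi hs) t (sub i hi ht))
  have s1 : ∑ i ∈ range N, (x i - f (unifGrid l u (N+1) i))^2 ≤ S := by
    rw [hS, Finset.sum_range_succ]
    have := sq_nonneg (x N - f (unifGrid l u (N+1) N))
    linarith
  have s2 : ∑ i ∈ range N, (x (i+1) - f (unifGrid l u (N+1) (i+1)))^2 ≤ S := by
    rw [hS, Finset.sum_range_succ']
    have := sq_nonneg (x 0 - f (unifGrid l u (N+1) 0))
    linarith
  rw [← Finset.mul_sum, Finset.sum_add_distrib, ← Finset.mul_sum, Finset.sum_add_distrib,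
    Finset.sum_const, Finset.card_range, nsmul_eq_mul] at hle
  -- numeric
  set k := Real.sqrt (8/15) with hk
  have hk2 : k ^ 2 = 8/15 := Real.sq_sqrt (by norm_num)
  have hlt : k * r * Lf * h < ε := by
    have h1 : k * (W * r) * Lf / ε < N := by
      push_cast at hI; linarith
    rw [div_lt_iff₀ hε] at h1
    rw [hh, mul_div_assoc', div_lt_iff₀ hNR]
    linarith
  have hpos : 0 < k * r * Lf * h := by positivity
  have hA : h * S < 3/8 * ε^2 := by
    rw [hrel] at hx
    have h1 : h * S < h * (3/8 * k * r * Lf * ε) := mul_lt_mul_of_pos_left hx hhpos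
    have h2 : k * r * Lf * h * ε < ε * ε := mul_lt_mul_of_pos_right hlt hε
    nlinarith
  have hB : 8/15 * (W * (Lf * h)^2) < ε^2 := by
    have : (k * r * Lf * h)^2 < ε^2 := by gcongr
    have e : (k * r * Lf * h)^2 = 8/15 * (W * (Lf * h)^2) := by
      rw [← hk2, ← hr2]; ring
    linarith
  have hfin : ∫ t in l..u, (fhat t - f t)^2 < ε^2 := by
    have h3 := mul_le_mul_of_nonneg_left (add_le_add s1 s2) hhpos.le
    have h4 : h * (N * (16/75 * (Lf*h)^2)) = 16/75 * (W * (Lf*h)^2) := by rw [← hNh]; ring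
    rw [mul_add, h4] at hle
    linarith
  rw [Real.sqrt_lt' hε]
  exact hfin
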